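/- arXiv:2512.17922 — 3 statements merged into one kernel-verified Lean document; each statement's English description precedes it below -/
import Mathlib

section
/- Every point of (0,1) other than the symmetric point 1/2 is moved strictly away from 1/2 by the SSB map: for all x ∈ (0,1) with x ≠ 1/2, |g(x) − 1/2| > |x − 1/2|. In particular the state before symmetry breaking φ = 1/2 is an unstable (repelling) fixed point. -/
/-!
By the double-angle formula, the SSB map in the coordinate `t = 2x - 1` centred at `1/2` is
`t ↦ sin (π t / 2)` (`g_sub_half`). Repulsion from `1/2` is therefore the strict Jordan inequality
`t < sin (π t / 2)` on `0 < t < 1` (`Real.lt_sin_mul`), applied to `t` or `-t` according to the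
side of `1/2` on which `x` lies; `t = 0` gives the fixed point.
-/

open Real

/-- The SSB map `g(x) = sin(πx/2)²`. -/
noncomputable def g : ℝ → ℝ := fun x => Real.sin (π * x / 2) ^ 2

/-- The centred form of the SSB map: in the coordinate `t = 2x - 1`, it is `t ↦ sin (π t / 2)`. -/
lemma g_sub_half (x : ℝ) : g x - 1/2 = sin (π / 2 * (2 * x - 1)) / 2 := by
  have h₁ : π / 2 * (2 * x - 1) = 2 * (π * x / 2) - π / 2 := by ring
  rw [h₁, sin_sub_pi_div_two, cos_two_mul, cos_sq', g]
  ring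

/-- Every point of `(0,1)` other than `1/2` is moved strictly away from `1/2`
by the SSB map; in particular the SBSB state `1/2` is an unstable (repelling)
fixed point. -/
theorem ssb_map_repelling_from_half :
    (∀ x ∈ Set.Ioo (0:ℝ) 1, x ≠ 1/2 → |g x - 1/2| > |x - 1/2|) ∧
    g (1/2) = 1/2 := by
  refine ⟨fun x hx hne => ?_, ?_⟩
  · obtain ⟨h0, h1⟩ := hx
    rw [g_sub_half]
    rcases lt_or_gt_of_ne hne with h | h
    · have key := lt_sin_mul (x := 1 - 2 * x) (by linarith) (by linarith)
      have hneg : π / 2 * (2 * x - 1) = -(π / 2 * (1 - 2 * x)) := by ring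
      rw [hneg, sin_neg, abs_of_neg (by linarith), abs_of_neg (by linarith)]
      linarith
    · have key := lt_sin_mul (x := 2 * x - 1) (by linarith) (by linarith)
      rw [abs_of_pos (by linarith), abs_of_pos (by linarith)]
      linarith
  · have h := g_sub_half (1/2)
    norm_num at h
    linarith
end

section
/- Superexponential convergence to the 0-attractor: if 0 ≤ x < 4/π², then for every natural number n the n-th iterate of the SSB map satisfies gⁿ(x) ≤ (4/π²)·((π²/4)·x)^(2ⁿ). -/
/-!
The bound `sin y ^ 2 ≤ y ^ 2` gives `g y ≤ (π²/4) y²` (`g_le_sq`). In the rescaled variable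
`u = (π²/4) y` one step sends `u` to a value at most `u²`, and induction
yields `u_n ≤ u_0 ^ (2 ^ n)`. Squaring the inductive bound uses nonnegativity of the iterates
(`g_iterate_nonneg`).
-/

open Real

/-- Since `sin y ^ 2 ≤ y ^ 2` for every real `y`, the quadratic bound holds on all of `ℝ`, so the induction below
never needs the iterates to stay in `[0, 1]`. -/
theorem g_le_sq (x : ℝ) : g x ≤ π ^ 2 / 4 * x ^ 2 := by
  have h : Real.sin (π * x / 2) ^ 2 ≤ (π * x / 2) ^ 2 := Real.sin_sq_le_sq
  calc g x ≤ (π * x / 2) ^ 2 := h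
    _ = π ^ 2 / 4 * x ^ 2 := by ring

theorem g_nonneg (x : ℝ) : 0 ≤ g x := sq_nonneg _

theorem g_iterate_nonneg {x : ℝ} (hx : 0 ≤ x) (n : ℕ) : 0 ≤ g^[n] x := by
  cases n with
  | zero => exact hx
  | succ k =>
    rw [Function.iterate_succ_apply']
    exact g_nonneg _

/-- Superexponential convergence to the `0`-attractor: if `0 ≤ x < 4/π²`, then
for every `n`, the `n`-th iterate satisfies `g^[n] x ≤ (4/π²)·((π²/4)·x)^(2^n)`. -/
theorem ssb_map_superexponential :
    ∀ x : ℝ, 0 ≤ x → x < 4 / π ^ 2 →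
      ∀ n : ℕ, g^[n] x ≤ 4 / π ^ 2 * (π ^ 2 / 4 * x) ^ (2 ^ n) := by
  intro x hx _ n
  induction n with
  | zero =>
    refine le_of_eq ?_
    simp only [Function.iterate_zero, id_eq, pow_zero, pow_one]
    field_simp
  | succ k ih =>
    rw [Function.iterate_succ_apply']
    calc g (g^[k] x) ≤ π ^ 2 / 4 * (g^[k] x) ^ 2 := g_le_sq _
      _ ≤ π ^ 2 / 4 * (4 / π ^ 2 * (π ^ 2 / 4 * x) ^ (2 ^ k)) ^ 2 := by
        have := g_iterate_nonneg hx k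
        gcongr
      _ = 4 / π ^ 2 * (π ^ 2 / 4 * x) ^ (2 ^ (k + 1)) := by
        rw [pow_succ 2 k, pow_mul, mul_pow (4 / π ^ 2)]
        generalize (π ^ 2 / 4 * x) ^ (2 ^ k) = t
        field_simp
end

section
/- For every n ≥ 1, the fixed points of the n-fold iterate gⁿ of the SSB map in [0,1] are exactly 0, 1/2 and 1; i.e., no new periodic points of period dividing n arise in [0,1]. -/
/-!
Since `g x = (1 - cos (π x)) / 2`, the concavity bound `1 - 2 x < cos (π x)` on `(0, 1/2)`
gives `0 < g x < x` on `(0, 1/2)`, so iterating `g` there strictly decreases the point. The symmetry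
`g (1 - x) = 1 - g x` shows that iterating strictly increases points of `(1/2, 1)`. Hence only
`0`, `1/2` and `1`, which `g` itself fixes, can be periodic.
-/

open Real

lemma g_eq_cos (x : ℝ) : g x = (1 - Real.cos (π * x)) / 2 := by
  have h := Real.cos_sq_add_sin_sq (π * x / 2)
  have h2 := Real.cos_two_mul (π * x / 2)
  rw [show 2 * (π * x / 2) = π * x by ring] at h2
  unfold g
  linarith

lemma g_one_sub (x : ℝ) : g (1 - x) = 1 - g x := by
  rw [g_eq_cos, g_eq_cos, mul_sub, mul_one, Real.cos_pi_sub]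
  ring

lemma g_pos_and_lt {x : ℝ} (h0 : 0 < x) (h1 : x < 1 / 2) : 0 < g x ∧ g x < x := by
  have hπ := Real.pi_pos
  have hy : 0 < π * x := by positivity
  have hy2 : π * x < π / 2 := by nlinarith
  constructor
  · have : 0 < Real.sin (π * x / 2) := Real.sin_pos_of_pos_of_lt_pi (by linarith) (by linarith)
    unfold g
    positivity
  · have h := Real.lt_sin_mul (x := 1 - 2 * x) (by linarith) (by linarith)
    rw [show π / 2 * (1 - 2 * x) = π / 2 - π * x by ring, Real.sin_pi_div_two_sub] at h
    rw [g_eq_cos]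
    linarith

lemma g_iterate_lt (n : ℕ) {x : ℝ} (h0 : 0 < x) (h1 : x < 1 / 2) : g^[n + 1] x < x := by
  induction n generalizing x with
  | zero => exact (g_pos_and_lt h0 h1).2
  | succ n ih =>
    obtain ⟨hp, hl⟩ := g_pos_and_lt h0 h1
    rw [Function.iterate_succ_apply]
    exact (ih hp (hl.trans h1)).trans hl

lemma g_iterate_one_sub (n : ℕ) (x : ℝ) : g^[n] (1 - x) = 1 - g^[n] x :=
  (Function.Semiconj.iterate_right (f := fun y : ℝ => 1 - y)
    (fun y => (g_one_sub y).symm) n x).symm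

/-- For every `n ≥ 1`, the fixed points of the `n`-fold iterate `g^[n]` in
`[0,1]` are exactly `0`, `1/2` and `1`: no new periodic points of period
dividing `n` arise in `[0,1]`. -/
theorem ssb_map_iterate_fixedPoints :
    ∀ n : ℕ, 1 ≤ n → ∀ x ∈ Set.Icc (0:ℝ) 1,
      (g^[n] x = x ↔ x = 0 ∨ x = 1/2 ∨ x = 1) := by
  intro n hn x hx
  obtain ⟨m, rfl⟩ := Nat.exists_eq_add_of_le' hn
  constructor
  · intro h
    by_contra! hne
    obtain ⟨hne0, hneh, hne1⟩ := hne
    have hx0 : 0 < x := lt_of_le_of_ne hx.1 (Ne.symm hne0)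
    have hx1 : x < 1 := lt_of_le_of_ne hx.2 hne1
    rcases lt_or_gt_of_ne hneh with hlt | hgt
    · exact (g_iterate_lt m hx0 hlt).ne h
    · have := g_iterate_lt m (x := 1 - x) (by linarith) (by linarith)
      rw [g_iterate_one_sub, h] at this
      exact lt_irrefl _ this
  · have h0 : g 0 = 0 := by simp [g]
    have hh : g (1 / 2) = 1 / 2 := by
      rw [g_eq_cos, mul_one_div, Real.cos_pi_div_two, sub_zero]
    have h1 : g 1 = 1 := by simp [g]
    rintro (rfl | rfl | rfl)
    · exact Function.iterate_fixed h0 _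
    · exact Function.iterate_fixed hh _
    · exact Function.iterate_fixed h1 _
end
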